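/- The metric space (𝓜, d_𝓜) is path-connected: for η,ν ∈ 𝓜, the map t ↦ (1−t)η + tν for t ∈ [0,1] is a continuous path from η to ν, and moreover d_𝓜(η, (1−t)η + tν) ≤ d_𝓜(η,ν) for all t ∈ [0,1]. -/

import Mathlib

open MeasureTheory Set Filter
open scoped ENNReal Classical

variable {X : Type*} [MetricSpace X] [MeasurableSpace X]

/-- Total mass of a measure, as a real number. -/
noncomputable def mass (ν : Measure X) : ℝ := (ν Set.univ).toReal

/-- The support of a measure. -/
def msupp (ν : Measure X) : Set X := {x : X | ∀ ε : ℝ, 0 < ε → 0 < ν (Metric.ball x ε)}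

/-- The set `𝓜` of measures dominated by `μ` with compact support. -/
def MM (μ : Measure X) : Set (Measure X) := {ν | ν ≤ μ ∧ IsCompact (msupp ν)}

/-- Gauge function `h` used in the definition of the mass transport metric. -/
def IsGauge (h : ℝ → ℝ) : Prop :=
  StrictMonoOn h (Set.Ici 0) ∧ ContinuousOn h (Set.Ici 0) ∧ h 0 = 0 ∧
  Tendsto (fun ε => h ε / ε) (nhdsWithin 0 (Set.Ioi 0)) (nhds 0) ∧
  (∀ a b : ℝ, 0 ≤ a → 0 ≤ b → h a + h b ≤ h (a + b)) ∧
  Tendsto h atTop atTop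

/-- `Γ_{ε,δ}(ν,η) ≠ ∅`: existence of a countable mass-transport decomposition. -/
def GammaDecomp (μ : Measure X) (ε δ : ℝ) (ν η : Measure X) : Prop :=
  ∃ νi ηi : ℕ → Measure X,
    (∀ i, νi i ∈ MM μ) ∧ (∀ i, ηi i ∈ MM μ) ∧
    ν = Measure.sum νi ∧ η = Measure.sum ηi ∧
    (∃ S : ℝ, HasSum (fun i => |mass (νi i) - mass (ηi i)|) S ∧ S ≤ δ) ∧
    (∀ i, Metric.diam (msupp (νi i) ∪ msupp (ηi i)) ≤ ε)

/-- The mass transport metric `d_𝓜`. -/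
noncomputable def dM (h : ℝ → ℝ) (μ : Measure X) (ν η : Measure X) : ℝ :=
  sInf {ε : ℝ | 0 < ε ∧ GammaDecomp μ ε (h ε) ν η}

/-- A rectifiable curve in `𝓜` subparametrized by arc-length: a `1`-Lipschitz map
`[0,b] → (𝓜, d_𝓜)`. -/
def IsCurveM (h : ℝ → ℝ) (μ : Measure X) (b : ℝ) (γ : ℝ → Measure X) : Prop :=
  0 ≤ b ∧ (∀ t ∈ Icc (0:ℝ) b, γ t ∈ MM μ) ∧
  ∀ s ∈ Icc (0:ℝ) b, ∀ t ∈ Icc (0:ℝ) b, dM h μ (γ s) (γ t) ≤ |s - t|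

/-- A rectifiable curve in `𝓧 = 𝓜 \ {0}` subparametrized by arc-length. -/
def IsCurveX (h : ℝ → ℝ) (μ : Measure X) (b : ℝ) (γ : ℝ → Measure X) : Prop :=
  IsCurveM h μ b γ ∧ ∀ t ∈ Icc (0:ℝ) b, γ t ≠ 0

/-- The mean value functional `F_f(η) = (1/‖η‖) ∫ f dη`. -/
noncomputable def FfM (f : X → ℝ) (η : Measure X) : ℝ := (∫ x, f x ∂η) / mass η

/-- `r_F^ε(η)`. -/
noncomputable def rGradE (h : ℝ → ℝ) (μ : Measure X) (F : Measure X → ℝ) (ε : ℝ)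
    (η : Measure X) : ℝ≥0∞ :=
  sSup {r : ℝ≥0∞ | ∃ (b : ℝ) (γ : ℝ → Measure X) (s : ℝ),
    IsCurveX h μ b γ ∧ γ 0 = η ∧ 0 < s ∧ s < ε ∧ s < b ∧
    r = ENNReal.ofReal (|F (γ s) - F η| / s)}

/-- The upper gradient `r_F(η) = lim_{ε→0} r_F^ε(η)`. -/
noncomputable def rGrad (h : ℝ → ℝ) (μ : Measure X) (F : Measure X → ℝ)
    (η : Measure X) : ℝ≥0∞ :=
  ⨅ (ε : ℝ) (_ : 0 < ε), rGradE h μ F ε η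

/-- Upper semicontinuous regularization along curves of `g : 𝓧 → [0,∞]`. -/
noncomputable def breveG (h : ℝ → ℝ) (μ : Measure X) (g : Measure X → ℝ≥0∞)
    (η : Measure X) : ℝ≥0∞ :=
  ⨅ (s : ℝ) (_ : 0 < s), sSup {r : ℝ≥0∞ | ∃ (b : ℝ) (γ : ℝ → Measure X) (t : ℝ),
    IsCurveX h μ b γ ∧ γ 0 = η ∧ 0 ≤ t ∧ t < s ∧ t ≤ b ∧ r = g (γ t)}

/-- `sup { Σᵢ G(ηᵢ)^p ‖ηᵢ‖ }` over finite disjointly supported families in `𝓧`. -/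
noncomputable def LpPow (μ : Measure X) (p : ℝ) (G : Measure X → ℝ≥0∞) : ℝ≥0∞ :=
  sSup {r : ℝ≥0∞ | ∃ (k : ℕ) (η : Fin k → Measure X),
    (∀ i, η i ∈ MM μ ∧ η i ≠ 0) ∧
    (∀ i j, i ≠ j → Disjoint (msupp (η i)) (msupp (η j))) ∧
    r = ∑ i, (G (η i)) ^ p * (η i) Set.univ}

/-- The `𝓛^p(𝓧)` norm of `F : 𝓧 → ℝ`. -/
noncomputable def LpNorm (μ : Measure X) (p : ℝ) (F : Measure X → ℝ) : ℝ≥0∞ :=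
  (LpPow μ p (fun η => ENNReal.ofReal |F η|)) ^ (1 / p)

/-- The `𝓛^p(𝓧)` norm for an extended exponent `p ∈ [1,∞]`. -/
noncomputable def LpNormE (μ : Measure X) (p : ℝ≥0∞) (F : Measure X → ℝ) : ℝ≥0∞ :=
  if p = ∞ then ⨆ (η : Measure X) (_ : η ∈ MM μ ∧ η ≠ 0), ENNReal.ofReal |F η|
  else LpNorm μ p.toReal F


/-- The linear interpolation path `(1−t)η + tν` in `𝓜`. -/
noncomputable def pathMix {X : Type*} [MetricSpace X] [MeasurableSpace X]
    (η ν : Measure X) (t : ℝ) : Measure X :=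
  ENNReal.ofReal (1 - t) • η + ENNReal.ofReal t • ν

/-!
Two decompositions do all the work. Cutting two measures along a partition of the space into pieces
of diameter at most `ε` bounds their distance by `ε` as soon as their difference is dominated by a
measure of total mass at most `h ε`; for two points of the segment, `|s - t| • (η + ν)` dominates.
Interpolating a decomposition of `(η, ν)` piecewise decomposes `(η, (1 - t) η + t ν)`: each mass
defect is multiplied by `t` and no support leaves the union of the two original ones.
-/

section Measure

variable {α : Type*} [MeasurableSpace α]

lemma measure_sum_pi_single {ι : Type*} [DecidableEq ι] (i : ι) (m : Measure α) :
    Measure.sum (Pi.single i m) = m := by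
  ext s hs
  rw [Measure.sum_apply _ hs, tsum_eq_single i fun j hj ↦ by simp [Pi.single_eq_of_ne hj],
    Pi.single_eq_same]

lemma hasSum_measureReal_iUnion {ι : Type*} [Countable ι] {m : Measure α} [IsFiniteMeasure m]
    {B : ι → Set α} (hB : ∀ i, MeasurableSet (B i))
    (hd : Pairwise (Function.onFun Disjoint B)) :
    HasSum (fun i ↦ m.real (B i)) (m.real (⋃ i, B i)) := by
  have hsum : m (⋃ i, B i) = ∑' i, m (B i) := measure_iUnion hd hB
  rw [measureReal_def, hsum, ENNReal.tsum_toReal_eq fun i ↦ measure_ne_top m (B i)]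
  exact ENNReal.hasSum_toReal (hsum ▸ measure_ne_top m _)

lemma sum_restrict_of_iUnion_eq_univ {ι : Type*} [Countable ι] {B : ι → Set α}
    (hB : ∀ i, MeasurableSet (B i)) (hd : Pairwise (Function.onFun Disjoint B))
    (hU : ⋃ i, B i = univ) (m : Measure α) :
    Measure.sum (fun i ↦ m.restrict (B i)) = m := by
  rw [← Measure.restrict_iUnion hd hB, hU, Measure.restrict_univ]

end Measure

section Support

lemma msupp_eq_support (ν : Measure X) : msupp ν = ν.support := by
  ext x
  exact Metric.nhds_basis_ball.mem_measureSupport.symm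

lemma isClosed_msupp (ν : Measure X) : IsClosed (msupp ν) :=
  msupp_eq_support ν ▸ Measure.isClosed_support

lemma msupp_zero : msupp (0 : Measure X) = ∅ := by
  rw [msupp_eq_support, Measure.support_zero]

lemma msupp_mono {ν η : Measure X} (hνη : ν ≤ η) : msupp ν ⊆ msupp η := by
  simpa only [msupp_eq_support] using Measure.support_mono hνη

lemma msupp_restrict_subset_closure [OpensMeasurableSpace X] (ν : Measure X) (B : Set X) :
    msupp (ν.restrict B) ⊆ closure B := by
  rw [msupp_eq_support]
  exact Measure.support_restrict_subset.trans inter_subset_left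

end Support

section DominatedMeasures

variable {μ ν η : Measure X}

lemma zero_mem_MM (μ : Measure X) : 0 ∈ MM μ :=
  ⟨Measure.zero_le μ, msupp_zero (X := X) ▸ isCompact_empty⟩

lemma mem_MM_of_le (hη : η ∈ MM μ) (hνη : ν ≤ η) : ν ∈ MM μ :=
  ⟨hνη.trans hη.1, hη.2.of_isClosed_subset (isClosed_msupp ν) (msupp_mono hνη)⟩

lemma isFiniteMeasure_of_mem_MM [OpensMeasurableSpace X] [TopologicalSpace.SeparableSpace X]
    [IsFiniteMeasureOnCompacts μ] (hν : ν ∈ MM μ) : IsFiniteMeasure ν := by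
  have : SecondCountableTopology X := UniformSpace.secondCountable_of_separable X
  have hcompl : ν (msupp ν)ᶜ = 0 := msupp_eq_support ν ▸ Measure.measure_compl_support
  constructor
  calc ν univ = ν (msupp ν) := (measure_of_measure_compl_eq_zero hcompl).symm
    _ ≤ μ (msupp ν) := hν.1 _
    _ < ⊤ := hν.2.measure_lt_top

end DominatedMeasures

section Interpolation

variable {μ η ν : Measure X} {s t : ℝ}

lemma pathMix_zero (η ν : Measure X) : pathMix η ν 0 = η := by
  simp [pathMix]

lemma pathMix_one (η ν : Measure X) : pathMix η ν 1 = ν := by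
  simp [pathMix]

lemma pathMix_self (ht : t ∈ Icc (0 : ℝ) 1) (μ : Measure X) : pathMix μ μ t = μ := by
  rw [pathMix, ← add_smul, ← ENNReal.ofReal_add (sub_nonneg.2 ht.2) ht.1, sub_add_cancel,
    ENNReal.ofReal_one, one_smul]

lemma pathMix_le (hη : η ≤ μ) (hν : ν ≤ μ) (ht : t ∈ Icc (0 : ℝ) 1) : pathMix η ν t ≤ μ := by
  calc pathMix η ν t ≤ pathMix μ μ t := by unfold pathMix; gcongr
    _ = μ := pathMix_self ht μ

lemma msupp_pathMix_subset (η ν : Measure X) (t : ℝ) :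
    msupp (pathMix η ν t) ⊆ msupp η ∪ msupp ν := by
  simp only [msupp_eq_support, pathMix, Measure.support_add]
  exact union_subset_union Measure.smul_absolutelyContinuous.support_mono
    Measure.smul_absolutelyContinuous.support_mono

lemma pathMix_mem_MM (hη : η ∈ MM μ) (hν : ν ∈ MM μ) (ht : t ∈ Icc (0 : ℝ) 1) :
    pathMix η ν t ∈ MM μ :=
  ⟨pathMix_le hη.1 hν.1 ht,
    (hη.2.union hν.2).of_isClosed_subset (isClosed_msupp _) (msupp_pathMix_subset η ν t)⟩

lemma pathMix_sum {ι : Type*} (η ν : ι → Measure X) (t : ℝ) :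
    pathMix (Measure.sum η) (Measure.sum ν) t = Measure.sum fun i ↦ pathMix (η i) (ν i) t := by
  ext s hs
  simp only [pathMix, Measure.coe_add, Measure.coe_smul, Pi.add_apply, Pi.smul_apply, smul_eq_mul,
    Measure.sum_apply _ hs, ENNReal.tsum_add, ENNReal.tsum_mul_left]

lemma measureReal_pathMix [IsFiniteMeasure η] [IsFiniteMeasure ν] (ht : t ∈ Icc (0 : ℝ) 1)
    (B : Set X) : (pathMix η ν t).real B = (1 - t) * η.real B + t * ν.real B := by
  have := η.smul_finite (c := ENNReal.ofReal (1 - t)) ENNReal.ofReal_ne_top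
  have := ν.smul_finite (c := ENNReal.ofReal t) ENNReal.ofReal_ne_top
  rw [pathMix, measureReal_add_apply, measureReal_ennreal_smul_apply,
    measureReal_ennreal_smul_apply, ENNReal.toReal_ofReal (sub_nonneg.2 ht.2),
    ENNReal.toReal_ofReal ht.1]

lemma abs_measureReal_pathMix_sub_le [IsFiniteMeasure η] [IsFiniteMeasure ν]
    (hs : s ∈ Icc (0 : ℝ) 1) (ht : t ∈ Icc (0 : ℝ) 1) (B : Set X) :
    |(pathMix η ν s).real B - (pathMix η ν t).real B| ≤ |s - t| * (η.real B + ν.real B) := by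
  calc |(pathMix η ν s).real B - (pathMix η ν t).real B|
      = |(s - t) * (ν.real B - η.real B)| := by
        rw [measureReal_pathMix hs, measureReal_pathMix ht]; congr 1; ring
    _ = |s - t| * |ν.real B - η.real B| := abs_mul _ _
    _ ≤ |s - t| * (η.real B + ν.real B) := by
        gcongr
        rw [abs_le]
        constructor <;> linarith [measureReal_nonneg (μ := η) (s := B),
          measureReal_nonneg (μ := ν) (s := B)]

lemma abs_mass_sub_mass_pathMix [IsFiniteMeasure η] [IsFiniteMeasure ν]
    (ht : t ∈ Icc (0 : ℝ) 1) : |mass η - mass (pathMix η ν t)| = t * |mass η - mass ν| := by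
  have hmass : mass (pathMix η ν t) = (1 - t) * mass η + t * mass ν := measureReal_pathMix ht univ
  calc |mass η - mass (pathMix η ν t)| = |t * (mass η - mass ν)| := by rw [hmass]; congr 1; ring
    _ = t * |mass η - mass ν| := by rw [abs_mul, abs_of_nonneg ht.1]

end Interpolation

section Decomposition

variable {μ η ν : Measure X} {ε δ : ℝ}

lemma gammaDecomp_of_diam_le (hη : η ∈ MM μ) (hν : ν ∈ MM μ)
    (hdiam : Metric.diam (msupp η ∪ msupp ν) ≤ ε) (hmass : |mass η - mass ν| ≤ δ) :
    GammaDecomp μ ε δ η ν := by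
  have hmem {θ : Measure X} (hθ : θ ∈ MM μ) (i : ℕ) :
      (Pi.single 0 θ : ℕ → Measure X) i ∈ MM μ := by
    rcases eq_or_ne i 0 with rfl | hi
    · simpa only [Pi.single_eq_same] using hθ
    · simpa only [Pi.single_eq_of_ne hi] using zero_mem_MM μ
  refine ⟨Pi.single 0 η, Pi.single 0 ν, hmem hη, hmem hν, (measure_sum_pi_single 0 η).symm,
    (measure_sum_pi_single 0 ν).symm, ⟨_, hasSum_single 0 fun i hi ↦ ?_, ?_⟩, fun i ↦ ?_⟩
  · simp [Pi.single_eq_of_ne hi]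
  · simpa only [Pi.single_eq_same] using hmass
  · rcases eq_or_ne i 0 with rfl | hi
    · simpa only [Pi.single_eq_same] using hdiam
    · simpa [Pi.single_eq_of_ne hi, msupp_zero] using Metric.diam_nonneg.trans hdiam

lemma gammaDecomp_of_abs_measureReal_sub_le [OpensMeasurableSpace X]
    [TopologicalSpace.SeparableSpace X] {θ : Measure X} [IsFiniteMeasure θ]
    (hη : η ∈ MM μ) (hν : ν ∈ MM μ)
    (hθ : ∀ B, MeasurableSet B → |η.real B - ν.real B| ≤ θ.real B) (hε : 0 < ε)
    (hδ : θ.real univ ≤ δ) : GammaDecomp μ ε δ η ν := by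
  obtain ⟨B, hB, hbdd, hdiam, hU, hd⟩ := SeparableSpace.exists_measurable_partition_diam_le X hε
  have mass_restrict (m : Measure X) (i : ℕ) : mass (m.restrict (B i)) = m.real (B i) := by
    rw [mass, Measure.restrict_apply_univ, measureReal_def]
  have hθ_sum : HasSum (fun i ↦ θ.real (B i)) (θ.real univ) := by
    simpa only [hU] using hasSum_measureReal_iUnion (m := θ) hB hd
  have hle (i : ℕ) : |mass (η.restrict (B i)) - mass (ν.restrict (B i))| ≤ θ.real (B i) := by
    simpa only [mass_restrict] using hθ (B i) (hB i)
  have hsum := (hθ_sum.summable.of_nonneg_of_le (fun _ ↦ abs_nonneg _) hle).hasSum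
  refine ⟨fun i ↦ η.restrict (B i), fun i ↦ ν.restrict (B i),
    fun i ↦ mem_MM_of_le hη Measure.restrict_le_self,
    fun i ↦ mem_MM_of_le hν Measure.restrict_le_self,
    (sum_restrict_of_iUnion_eq_univ hB hd hU η).symm,
    (sum_restrict_of_iUnion_eq_univ hB hd hU ν).symm,
    ⟨_, hsum, (hasSum_le hle hsum hθ_sum).trans hδ⟩, fun i ↦ ?_⟩
  calc Metric.diam (msupp (η.restrict (B i)) ∪ msupp (ν.restrict (B i)))
      ≤ Metric.diam (closure (B i)) :=
        Metric.diam_mono (union_subset (msupp_restrict_subset_closure η (B i))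
          (msupp_restrict_subset_closure ν (B i))) (hbdd i).closure
    _ = Metric.diam (B i) := Metric.diam_closure _
    _ ≤ ε := hdiam i

lemma GammaDecomp.pathMix_right [IsFiniteMeasure η] [IsFiniteMeasure ν] {t : ℝ}
    (hG : GammaDecomp μ ε δ η ν) (ht : t ∈ Icc (0 : ℝ) 1) :
    GammaDecomp μ ε δ η (pathMix η ν t) := by
  obtain ⟨ηi, νi, hηi, hνi, hη, hν, ⟨S, hS, hSδ⟩, hdiam⟩ := hG
  have hη_fin (i : ℕ) : IsFiniteMeasure (ηi i) := isFiniteMeasure_of_le η (hη ▸ Measure.le_sum ηi i)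
  have hν_fin (i : ℕ) : IsFiniteMeasure (νi i) := isFiniteMeasure_of_le ν (hν ▸ Measure.le_sum νi i)
  have hS_nonneg : 0 ≤ S := hS.nonneg fun _ ↦ abs_nonneg _
  refine ⟨ηi, fun i ↦ pathMix (ηi i) (νi i) t, hηi, fun i ↦ pathMix_mem_MM (hηi i) (hνi i) ht, hη,
    by rw [hη, hν, pathMix_sum], ⟨t * S, ?_, ?_⟩, fun i ↦ ?_⟩
  · simpa only [abs_mass_sub_mass_pathMix ht] using hS.mul_left t
  · exact (mul_le_of_le_one_left hS_nonneg ht.2).trans hSδ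
  · have hsubset := union_subset subset_union_left (msupp_pathMix_subset (ηi i) (νi i) t)
    exact (Metric.diam_mono hsubset ((hηi i).2.union (hνi i).2).isBounded).trans (hdiam i)

end Decomposition

section Distance

variable {h : ℝ → ℝ} {μ η ν : Measure X}

lemma IsGauge.pos (hh : IsGauge h) {ε : ℝ} (hε : 0 < ε) : 0 < h ε := by
  obtain ⟨hmono, -, hzero, -⟩ := hh
  exact hzero ▸ hmono self_mem_Ici hε.le hε

lemma IsGauge.tendsto_atTop (hh : IsGauge h) : Tendsto h atTop atTop := hh.2.2.2.2.2

lemma dM_le_of_gammaDecomp {ε : ℝ} (hε : 0 < ε) (hG : GammaDecomp μ ε (h ε) η ν) :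
    dM h μ η ν ≤ ε :=
  csInf_le ⟨0, fun _ hx ↦ hx.1.le⟩ ⟨hε, hG⟩

lemma exists_pos_gammaDecomp (hh : Tendsto h atTop atTop) (hη : η ∈ MM μ) (hν : ν ∈ MM μ) :
    ∃ ε, 0 < ε ∧ GammaDecomp μ ε (h ε) η ν := by
  obtain ⟨ε, hε, hmass, hdiam⟩ := ((eventually_gt_atTop 0).and
    ((hh.eventually_ge_atTop |mass η - mass ν|).and
      (eventually_ge_atTop (Metric.diam (msupp η ∪ msupp ν))))).exists
  exact ⟨ε, hε, gammaDecomp_of_diam_le hη hν hdiam hmass⟩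

lemma dM_pathMix_right_le [IsFiniteMeasure η] [IsFiniteMeasure ν] (hh : Tendsto h atTop atTop)
    (hη : η ∈ MM μ) (hν : ν ∈ MM μ) {t : ℝ} (ht : t ∈ Icc (0 : ℝ) 1) :
    dM h μ η (pathMix η ν t) ≤ dM h μ η ν :=
  le_csInf (exists_pos_gammaDecomp hh hη hν) fun _ hε ↦
    dM_le_of_gammaDecomp hε.1 (hε.2.pathMix_right ht)

variable [OpensMeasurableSpace X] [TopologicalSpace.SeparableSpace X]
  [IsFiniteMeasure η] [IsFiniteMeasure ν]

lemma dM_pathMix_pathMix_le (hη : η ∈ MM μ) (hν : ν ∈ MM μ) {s t ε : ℝ}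
    (hs : s ∈ Icc (0 : ℝ) 1) (ht : t ∈ Icc (0 : ℝ) 1) (hε : 0 < ε)
    (hst : |s - t| * (mass η + mass ν) ≤ h ε) :
    dM h μ (pathMix η ν s) (pathMix η ν t) ≤ ε := by
  let θ : Measure X := Real.nnabs (s - t) • (η + ν)
  have hθ (B : Set X) : θ.real B = |s - t| * (η.real B + ν.real B) := by
    rw [measureReal_nnreal_smul_apply, measureReal_add_apply, Real.coe_nnabs]
  refine dM_le_of_gammaDecomp hε <| gammaDecomp_of_abs_measureReal_sub_le (θ := θ)
    (pathMix_mem_MM hη hν hs) (pathMix_mem_MM hη hν ht) (fun B _ ↦ ?_) hε ((hθ univ).trans_le hst)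
  exact (abs_measureReal_pathMix_sub_le hs ht B).trans_eq (hθ B).symm

lemma exists_pos_forall_dM_pathMix_le (hh : ∀ ε, 0 < ε → 0 < h ε) (hη : η ∈ MM μ)
    (hν : ν ∈ MM μ) {ε : ℝ} (hε : 0 < ε) :
    ∃ δ, 0 < δ ∧ ∀ s ∈ Icc (0 : ℝ) 1, ∀ t ∈ Icc (0 : ℝ) 1, |s - t| < δ →
      dM h μ (pathMix η ν s) (pathMix η ν t) ≤ ε := by
  obtain ⟨δ, hδ, hδ_mul⟩ := exists_pos_mul_lt (hh ε hε) (mass η + mass ν)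
  refine ⟨δ, hδ, fun s hs t ht hst ↦ dM_pathMix_pathMix_le hη hν hs ht hε ?_⟩
  have hmass : 0 ≤ mass η + mass ν := add_nonneg ENNReal.toReal_nonneg ENNReal.toReal_nonneg
  calc |s - t| * (mass η + mass ν) ≤ δ * (mass η + mass ν) := by gcongr
    _ = (mass η + mass ν) * δ := mul_comm _ _
    _ ≤ h ε := hδ_mul.le

theorem stmt8_general (hpos : ∀ ε, 0 < ε → 0 < h ε) (htop : Tendsto h atTop atTop)
    (hη : η ∈ MM μ) (hν : ν ∈ MM μ) :
    (∀ t ∈ Icc (0:ℝ) 1, pathMix η ν t ∈ MM μ) ∧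
    pathMix η ν 0 = η ∧ pathMix η ν 1 = ν ∧
    (∀ t ∈ Icc (0:ℝ) 1, ∀ ε : ℝ, 0 < ε → ∃ δ : ℝ, 0 < δ ∧
      ∀ s ∈ Icc (0:ℝ) 1, |s - t| < δ → dM h μ (pathMix η ν s) (pathMix η ν t) ≤ ε) ∧
    (∀ t ∈ Icc (0:ℝ) 1, dM h μ η (pathMix η ν t) ≤ dM h μ η ν) := by
  refine ⟨fun t ht ↦ pathMix_mem_MM hη hν ht, pathMix_zero η ν, pathMix_one η ν,
    fun t ht ε hε ↦ ?_, fun t ht ↦ dM_pathMix_right_le htop hη hν ht⟩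
  obtain ⟨δ, hδ, hclose⟩ := exists_pos_forall_dM_pathMix_le hpos hη hν hε
  exact ⟨δ, hδ, fun s hs hst ↦ hclose s hs t ht hst⟩

end Distance

/-- `(𝓜, d_𝓜)` is path-connected via `t ↦ (1−t)η + tν`, and moreover
`d_𝓜(η, (1−t)η + tν) ≤ d_𝓜(η,ν)`. -/
theorem stmt8 {X : Type*} [MetricSpace X] [MeasurableSpace X] [BorelSpace X]
    [LocallyCompactSpace X] [TopologicalSpace.SeparableSpace X]
    (μ : Measure X) [μ.Regular]
    (hμ : ∀ (x : X) (r : ℝ), 0 < r → 0 < μ (Metric.ball x r) ∧ μ (Metric.ball x r) < ⊤)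
    (h : ℝ → ℝ) (hh : IsGauge h)
    (η ν : Measure X) (hη : η ∈ MM μ) (hν : ν ∈ MM μ) :
    (∀ t ∈ Icc (0:ℝ) 1, pathMix η ν t ∈ MM μ) ∧
    pathMix η ν 0 = η ∧ pathMix η ν 1 = ν ∧
    (∀ t ∈ Icc (0:ℝ) 1, ∀ ε : ℝ, 0 < ε → ∃ δ : ℝ, 0 < δ ∧
      ∀ s ∈ Icc (0:ℝ) 1, |s - t| < δ → dM h μ (pathMix η ν s) (pathMix η ν t) ≤ ε) ∧
    (∀ t ∈ Icc (0:ℝ) 1, dM h μ η (pathMix η ν t) ≤ dM h μ η ν) := by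
  have := isFiniteMeasure_of_mem_MM hη
  have := isFiniteMeasure_of_mem_MM hν
  exact stmt8_general (fun _ ↦ hh.pos) hh.tendsto_atTop hη hν
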